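/- arXiv:1204.0078 — 2 statements merged into one kernel-verified Lean document; each statement's English description precedes it below -/
import Mathlib

section
/- Let (X, Σ, μ) be a subprobability space, let Q be an error-control family on X, and let P be a Q-acceptable partition of X. Then there exists a finite or countable sequence (Q_i) of elements of Q such that the family R = {Q_i ∖ (Q_1 ∪ … ∪ Q_{i−1})}_i is a Q-acceptable partition of X, every element of R belongs to the sigma algebra generated by Q, and h(μ; R) ≤ h(μ; P). -/
open MeasureTheory ENNReal Filter

/-- The Shannon function `sh x = -x * log₂ x` (with `sh 0 = 0`, since `log 0 = 0`). -/
noncomputable def sh (x : ℝ) : ℝ := -x * Real.logb 2 x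

/-- A (countable, ℕ-indexed) partition of `X` w.r.t. the measure `μ`:
measurable, pairwise disjoint sets whose union has null complement. -/
def IsPartition {X : Type*} [MeasurableSpace X] (μ : Measure X) (P : ℕ → Set X) : Prop :=
  (∀ i, MeasurableSet (P i)) ∧ Pairwise (Function.onFun Disjoint P) ∧
    μ (Set.univ \ ⋃ i, P i) = 0

/-- The entropy `h(μ; P) = Σ_i sh(μ(P_i)) ∈ [0,∞]` of a countable family of sets. -/
noncomputable def partEntropy {X : Type*} [MeasurableSpace X]
    (μ : Measure X) (P : ℕ → Set X) : ℝ≥0∞ :=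
  ∑' i, ENNReal.ofReal (sh ((μ (P i)).toReal))

/-- An error-control family: a family of measurable sets covering `X`. -/
def IsErrorControl {X : Type*} [MeasurableSpace X] (𝒬 : Set (Set X)) : Prop :=
  (∀ Q ∈ 𝒬, MeasurableSet Q) ∧ ⋃₀ 𝒬 = Set.univ

/-- `P` is `𝒬`-acceptable: every element of `P` is contained in some member of `𝒬`. -/
def Acceptable {X : Type*} (𝒬 : Set (Set X)) (P : ℕ → Set X) : Prop :=
  ∀ i, ∃ Q ∈ 𝒬, P i ⊆ Q

/-- The entropy `H(μ; 𝒬)`: the infimum of entropies of `𝒬`-acceptable partitions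
(`= ∞` if there is none). -/
noncomputable def coverEntropy {X : Type*} [MeasurableSpace X]
    (μ : Measure X) (𝒬 : Set (Set X)) : ℝ≥0∞ :=
  ⨅ (P : ℕ → Set X) (_ : IsPartition μ P) (_ : Acceptable 𝒬 P), partEntropy μ P

lemma sh_aux_tangent {a x : ℝ} (ha : 0 < a) (hx : 0 ≤ x) :
    sh x ≤ sh a + (x - a) * (-(Real.log a + 1) / Real.log 2) := by
  have h2 : 0 < Real.log 2 := Real.log_pos (by norm_num)
  have key : -x * Real.log x ≤ -a * Real.log a + (x - a) * (-(Real.log a + 1)) := by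
    rcases hx.eq_or_lt with rfl | hx
    · simp; nlinarith
    · have := Real.log_le_sub_one_of_pos (div_pos ha hx)
      rw [Real.log_div ha.ne' hx.ne'] at this
      have h3 := mul_le_mul_of_nonneg_left this hx.le
      have h4 : x * (a / x - 1) = a - x := by field_simp
      nlinarith
  unfold sh Real.logb
  rw [← mul_div_assoc, ← mul_div_assoc, ← mul_div_assoc, ← add_div]
  exact div_le_div_of_nonneg_right key h2.le

lemma sh_aux_zero : sh 0 = 0 := by simp [sh]

lemma sh_aux_nonneg {x : ℝ} (h0 : 0 ≤ x) (h1 : x ≤ 1) : 0 ≤ sh x := by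
  unfold sh Real.logb
  have h2 : 0 < Real.log 2 := Real.log_pos (by norm_num)
  have := Real.log_nonpos h0 h1
  rw [← mul_div_assoc]
  apply div_nonneg _ h2.le
  nlinarith

lemma sh_aux_dec {a b c : ℝ} (hc : 0 ≤ c) (hcb : c ≤ b) (hba : b ≤ a) (ha : 0 < a) :
    sh c ≤ sh b - (b - c) * (-(Real.log a + 1) / Real.log 2) := by
  have h2 : 0 < Real.log 2 := Real.log_pos (by norm_num)
  rcases (hc.trans hcb).eq_or_lt with hb | hb
  · have : c = 0 := by linarith
    subst this; simp [← hb]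
  · have h := sh_aux_tangent hb hc
    have hl := Real.log_le_log hb hba
    have : -(Real.log a + 1) / Real.log 2 ≤ -(Real.log b + 1) / Real.log 2 :=
      div_le_div_of_nonneg_right (by linarith) h2.le
    nlinarith

lemma sh_aux_step (b c : ℕ → ℝ) (k : ℕ) (r : ℝ) (hc : ∀ j, 0 ≤ c j) (hcb : ∀ j, c j ≤ b j)
    (hbk : ∀ j, b j ≤ b k) (hb1 : ∀ j, b j ≤ 1) (hck : c k = 0) (hr1 : r ≤ 1)
    (hr : HasSum (fun j => b j - c j) r) :
    ENNReal.ofReal (sh r) + ∑' j, ENNReal.ofReal (sh (c j)) ≤ ∑' j, ENNReal.ofReal (sh (b j)) := by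
  have hb0 : ∀ j, 0 ≤ b j := fun j => (hc j).trans (hcb j)
  have hr0 : 0 ≤ r := hr.nonneg (fun j => by linarith [hcb j])
  rcases (hb0 k).eq_or_lt with ha | ha
  · have hbz : ∀ j, b j = 0 := fun j => le_antisymm (by linarith [hbk j]) (hb0 j)
    have hcz : ∀ j, c j = 0 := fun j => le_antisymm (by linarith [hcb j, hbz j]) (hc j)
    have : r = 0 := by
      apply hr.unique
      simp [hbz, hcz, hasSum_zero]
    simp [this, hbz, hcz, sh_aux_zero]
  by_cases hfin : ∑' j, ENNReal.ofReal (sh (b j)) = ∞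
  · rw [hfin]; exact le_top
  have hsb : Summable (fun j => sh (b j)) := by
    have := ENNReal.summable_toReal hfin
    refine this.congr (fun j => ?_)
    rw [ENNReal.toReal_ofReal (sh_aux_nonneg (hb0 j) (hb1 j))]
  set D := -(Real.log (b k) + 1) / Real.log 2 with hD
  have hg : HasSum (fun j => sh (b j) - (b j - c j) * D + (if j = k then b k * D - sh (b k) else 0))
      ((∑' j, sh (b j)) - r * D + (b k * D - sh (b k))) :=
    (hsb.hasSum.sub (hr.mul_right D)).add (hasSum_ite_eq k _)
  have hle : ∀ j, sh (c j) ≤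
      sh (b j) - (b j - c j) * D + (if j = k then b k * D - sh (b k) else 0) := by
    intro j
    split_ifs with h
    · subst h; rw [hck, sh_aux_zero]; linarith
    · rw [add_zero]; exact sh_aux_dec (hc j) (hcb j) (hbk j) ha
  have hc0 : ∀ j, 0 ≤ sh (c j) := fun j => sh_aux_nonneg (hc j) ((hcb j).trans (hb1 j))
  have hsc : Summable (fun j => sh (c j)) := Summable.of_nonneg_of_le hc0 hle hg.summable
  have h1 : ∑' j, sh (c j) ≤ (∑' j, sh (b j)) - r * D + (b k * D - sh (b k)) :=
    hasSum_le hle hsc.hasSum hg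
  have h2 := sh_aux_tangent ha hr0
  rw [← hD] at h2
  rw [← ENNReal.ofReal_tsum_of_nonneg hc0 hsc,
    ← ENNReal.ofReal_tsum_of_nonneg (fun j => sh_aux_nonneg (hb0 j) (hb1 j)) hsb,
    ← ENNReal.ofReal_add (sh_aux_nonneg hr0 hr1) (tsum_nonneg hc0)]
  apply ENNReal.ofReal_le_ofReal
  linarith

lemma sh_aux_max (b : ℕ → ℝ) (h0 : ∀ j, 0 ≤ b j) (hs : Summable b) : ∃ k, ∀ j, b j ≤ b k := by
  by_cases h : ∃ j, 0 < b j
  · obtain ⟨j, hj⟩ := h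
    refine Continuous.exists_forall_ge' (continuous_of_discreteTopology) j ?_
    rw [Filter.cocompact_eq_cofinite]
    have := hs.tendsto_cofinite_zero
    filter_upwards [this.eventually (gt_mem_nhds hj)] with x hx using hx.le
  · push Not at h
    exact ⟨0, fun j => (h j).trans (h0 0)⟩

theorem stmt_3 {X : Type*} [MeasurableSpace X] (μ : Measure X) (hμ : μ Set.univ ≤ 1)
    (𝒬 : Set (Set X)) (h𝒬 : IsErrorControl 𝒬)
    (P : ℕ → Set X) (hP : IsPartition μ P) (hPQ : Acceptable 𝒬 P) :
    ∃ f : ℕ → Set X, (∀ i, f i ∈ 𝒬) ∧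
      IsPartition μ (fun i => f i \ ⋃ j ∈ Finset.range i, f j) ∧
      Acceptable 𝒬 (fun i => f i \ ⋃ j ∈ Finset.range i, f j) ∧
      (∀ i, MeasurableSet[MeasurableSpace.generateFrom 𝒬]
        (f i \ ⋃ j ∈ Finset.range i, f j)) ∧
      partEntropy μ (fun i => f i \ ⋃ j ∈ Finset.range i, f j) ≤ partEntropy μ P := by
  obtain ⟨hPm, hPd, hPn⟩ := hP
  haveI : IsFiniteMeasure μ := ⟨hμ.trans_lt ENNReal.one_lt_top⟩
  have hle1 : ∀ s : Set X, μ.real s ≤ 1 := fun s => by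
    have : μ s ≤ 1 := (measure_mono (Set.subset_univ s)).trans hμ
    exact ENNReal.toReal_le_of_le_ofReal zero_le_one (by simpa using this)
  choose Q hQ hPQ' using hPQ
  -- decomposition of a measurable set along `P`
  have hsum : ∀ s : Set X, MeasurableSet s → HasSum (fun j => μ.real (P j ∩ s)) (μ.real s) := by
    intro s hs
    have h1 : μ s = ∑' j, μ (P j ∩ s) := by
      rw [← measure_iUnion (fun i j hij => (hPd hij).mono Set.inter_subset_left
        Set.inter_subset_left) (fun j => (hPm j).inter hs), ← Set.iUnion_inter]
      apply le_antisymm _ (measure_mono Set.inter_subset_right)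
      calc μ s ≤ μ (((⋃ i, P i) ∩ s) ∪ (Set.univ \ ⋃ i, P i)) := by
            apply measure_mono
            intro x hx
            by_cases h : x ∈ ⋃ i, P i
            · exact Or.inl ⟨h, hx⟩
            · exact Or.inr ⟨trivial, h⟩
        _ ≤ _ := measure_union_le _ _
        _ = _ := by rw [hPn, add_zero]
    have h2 : ∑' j, μ (P j ∩ s) ≠ ∞ := by rw [← h1]; exact measure_ne_top μ s
    have := ENNReal.hasSum_toReal h2
    rw [Measure.real, h1, ENNReal.tsum_toReal_eq (fun _ => measure_ne_top _ _)]
    exact this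
  have hsel : ∀ U : Set X, ∃ k, ∀ j, μ.real (P j \ U) ≤ μ.real (P k \ U) := by
    intro U
    apply sh_aux_max _ (fun j => measureReal_nonneg)
    refine Summable.of_nonneg_of_le (fun j => measureReal_nonneg) (fun j => ?_)
      (hsum Set.univ MeasurableSet.univ).summable
    exact measureReal_mono (by rw [Set.inter_univ]; exact Set.diff_subset)
  choose sel hsel using hsel
  obtain ⟨U, hU0, hUs⟩ : ∃ U : ℕ → Set X, U 0 = ∅ ∧ ∀ n, U (n + 1) = U n ∪ Q (sel (U n)) :=
    ⟨fun n => Nat.rec ∅ (fun _ V => V ∪ Q (sel V)) n, rfl, fun n => rfl⟩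
  let f : ℕ → Set X := fun n => Q (sel (U n))
  have hf : ∀ i, f i ∈ 𝒬 := fun i => hQ _
  have hUf : ∀ n, (⋃ j ∈ Finset.range n, f j) = U n := by
    intro n
    induction n with
    | zero => simp [hU0]
    | succ n ih => rw [Finset.range_add_one, Finset.set_biUnion_insert, ih, hUs, Set.union_comm]
  have hfm : ∀ i, MeasurableSet (f i) := fun i => h𝒬.1 _ (hf i)
  have hUm : ∀ n, MeasurableSet (U n) := fun n => by
    rw [← hUf]; exact Finset.measurableSet_biUnion _ (fun i _ => hfm i)
  have hRm : ∀ i, MeasurableSet (f i \ U i) := fun i => (hfm i).diff (hUm i)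
  have hRd : Pairwise (Function.onFun Disjoint (fun i => f i \ U i)) := by
    have hlt : ∀ i j, i < j → Disjoint (f i \ U i) (f j \ U j) := by
      intro i j hij
      rw [Set.disjoint_left]
      rintro x ⟨hx, _⟩ ⟨_, hx'⟩
      apply hx'
      rw [← hUf]
      exact Set.mem_biUnion (Finset.mem_coe.2 (Finset.mem_range.2 hij)) hx
    intro i j hij
    rcases lt_or_gt_of_ne hij with h | h
    · exact hlt i j h
    · exact (hlt j i h).symm
  have hPR : ∀ n, P (sel (U n)) \ U n ⊆ f n \ U n := fun n =>
    Set.diff_subset_diff_left (hPQ' _)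
  refine ⟨f, hf, ?_⟩
  simp only [hUf]
  refine ⟨⟨hRm, hRd, ?_⟩, fun i => ⟨f i, hf i, Set.diff_subset⟩, fun i => ?_, ?_⟩
  · -- coverage
    have hRt : Tendsto (fun n => μ.real (f n \ U n)) atTop (nhds 0) := by
      have : ∑' n, μ (f n \ U n) ≠ ∞ := by
        rw [← measure_iUnion hRd hRm]; exact measure_ne_top _ _
      exact (ENNReal.summable_toReal this).tendsto_atTop_zero
    have hUsub : ∀ n, U n ⊆ ⋃ i, (f i \ U i) := by
      intro n
      induction n with
      | zero => simp [hU0]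
      | succ n ih =>
        rw [hUs]
        intro x hx
        by_cases h : x ∈ U n
        · exact ih h
        · exact Set.mem_iUnion.2 ⟨n, hx.resolve_left h, h⟩
    have hz : ∀ j, μ (P j \ ⋃ i, (f i \ U i)) = 0 := by
      intro j
      have : μ.real (P j \ ⋃ i, (f i \ U i)) ≤ 0 := by
        refine ge_of_tendsto' hRt (fun n => ?_)
        calc _ ≤ μ.real (P j \ U n) := measureReal_mono (Set.diff_subset_diff_right (hUsub n))
          _ ≤ _ := hsel _ j
          _ ≤ _ := measureReal_mono (hPR n)
      exact (measureReal_eq_zero_iff).1 (le_antisymm this measureReal_nonneg)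
    refine measure_mono_null (t := (Set.univ \ ⋃ i, P i) ∪ ⋃ j, (P j \ ⋃ i, (f i \ U i))) ?_
      (measure_union_null hPn (measure_iUnion_null hz))
    rintro x ⟨_, hx⟩
    by_cases h : x ∈ ⋃ i, P i
    · obtain ⟨j, hj⟩ := Set.mem_iUnion.1 h
      exact Or.inr (Set.mem_iUnion.2 ⟨j, hj, hx⟩)
    · exact Or.inl ⟨trivial, h⟩
  · have hg : ∀ i, MeasurableSet[MeasurableSpace.generateFrom 𝒬] (f i) :=
      fun i => MeasurableSpace.measurableSet_generateFrom (hf i)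
    rw [← hUf]
    exact MeasurableSet.diff (hg i) (Finset.measurableSet_biUnion _ (fun i _ => hg i))
  · have hstep : ∀ n, ENNReal.ofReal (sh (μ.real (f n \ U n))) +
        ∑' j, ENNReal.ofReal (sh (μ.real (P j \ U (n + 1)))) ≤
        ∑' j, ENNReal.ofReal (sh (μ.real (P j \ U n))) := by
      intro n
      have hsub : U n ⊆ U (n + 1) := by rw [hUs]; exact Set.subset_union_left
      refine sh_aux_step _ _ (sel (U n)) _ (fun j => measureReal_nonneg)
        (fun j => measureReal_mono (Set.diff_subset_diff_right hsub)) (hsel (U n))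
        (fun j => hle1 _) ?_ (hle1 _) ?_
      · have : P (sel (U n)) \ U (n + 1) = ∅ := by
          rw [Set.diff_eq_empty, hUs]
          exact (hPQ' _).trans Set.subset_union_right
        rw [this, measureReal_empty]
      · convert hsum _ (hRm n) using 2 with j
        rw [← measureReal_diff (Set.diff_subset_diff_right hsub) ((hPm j).diff (hUm _))]
        congr 1
        rw [hUs]
        ext x
        simp only [Set.mem_diff, Set.mem_union, Set.mem_inter_iff, f]
        tauto
    have hind : ∀ n, ∑ i ∈ Finset.range n, ENNReal.ofReal (sh (μ.real (f i \ U i))) +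
        ∑' j, ENNReal.ofReal (sh (μ.real (P j \ U n))) ≤
        ∑' j, ENNReal.ofReal (sh (μ.real (P j))) := by
      intro n
      induction n with
      | zero => simp [hU0]
      | succ n ih =>
        rw [Finset.sum_range_succ, add_assoc]
        exact (add_le_add_right (hstep n) _).trans ih
    unfold partEntropy
    exact ENNReal.tsum_le_of_sum_range_le (fun n => le_self_add.trans (hind n))
end

section
/- Let (X, Σ, μ) be a subprobability space and let Q be an error-control family on X such that there exists at least one Q-acceptable partition of X. Then for every ε > 0 there exists a partition P of X with P ≺ Q and every element of P in the sigma algebra generated by Q, such that h(μ; P) ≤ H(μ; Q) + ε. Moreover, P can be chosen of the form { Q_{σ(i)} ∖ ⋃_{k < i} Q_{σ(k)} }_i for some sequence (Q_{σ(i)}) of elements of Q. -/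
open MeasureTheory ENNReal Filter

theorem exists_sort (p : ℕ → ℝ) (hp : ∀ i, 0 ≤ p i) (ht : Tendsto p cofinite (nhds 0)) :
    ∃ σ : ℕ → ℕ, Function.Injective σ ∧ Antitone (p ∘ σ) ∧ ∀ i, i ∉ Set.range σ → p i = 0 := by
  have hfin : ∀ c : ℝ, 0 < c → {i | c ≤ p i}.Finite := by
    intro c hc
    have h := ht.eventually (gt_mem_nhds hc)
    rw [Filter.eventually_cofinite] at h
    simpa using h
  have hg : ∀ s : Finset ℕ, ∃ m, m ∉ s ∧ ∀ i, i ∉ s → p i ≤ p m := by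
    intro s
    by_cases h : ∃ j, j ∉ s ∧ 0 < p j
    · obtain ⟨j, hj, hpj⟩ := h
      have hf : ({i | p j ≤ p i} \ (s : Set ℕ)).Finite := (hfin _ hpj).sdiff
      obtain ⟨m, hm, hmax⟩ := Set.exists_max_image _ p hf ⟨j, by simpa using hj⟩
      refine ⟨m, by simpa using hm.2, fun i hi => ?_⟩
      by_cases hij : p j ≤ p i
      · exact hmax i ⟨hij, by simpa using hi⟩
      · have h1 : p j ≤ p m := hm.1
        linarith
    · push Not at h
      obtain ⟨m, hm⟩ := Infinite.exists_notMem_finset s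
      exact ⟨m, hm, fun i hi => (h i hi).trans (hp m)⟩
  choose g hg1 hg2 using hg
  let T : ℕ → Finset ℕ := fun n => Nat.rec ∅ (fun _ s => insert (g s) s) n
  have hT : ∀ n, T (n + 1) = insert (g (T n)) (T n) := fun n => rfl
  have hmono : Monotone T := monotone_nat_of_le_succ fun n => by
    rw [hT]; exact Finset.subset_insert _ _
  have hmem : ∀ m n, m < n → g (T m) ∈ T n := fun m n h =>
    hmono (Nat.succ_le_of_lt h) (by rw [Nat.succ_eq_add_one, hT]; exact Finset.mem_insert_self _ _)
  have hTr : ∀ n i, i ∈ T n → i ∈ Set.range (fun n => g (T n)) := by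
    intro n
    induction n with
    | zero => intro i hi; exact absurd hi (Finset.notMem_empty i)
    | succ n ih =>
      intro i hi
      rw [hT, Finset.mem_insert] at hi
      rcases hi with rfl | hi
      · exact ⟨n, rfl⟩
      · exact ih i hi
  have hinj : Function.Injective (fun n => g (T n)) := by
    intro m n h
    simp only at h
    rcases lt_trichotomy m n with h1 | h1 | h1
    · exact absurd (h ▸ hmem m n h1) (hg1 _)
    · exact h1
    · exact absurd (h ▸ hmem n m h1) (hg1 _)
  refine ⟨fun n => g (T n), hinj, ?_, ?_⟩
  · refine antitone_nat_of_succ_le fun n => ?_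
    refine hg2 (T n) _ fun h => hg1 (T (n + 1)) (hmono (Nat.le_succ n) h)
  · intro i hi
    by_contra hne
    have hpos : 0 < p i := lt_of_le_of_ne (hp i) (Ne.symm hne)
    refine Set.infinite_range_of_injective hinj ((hfin _ hpos).subset ?_)
    rintro _ ⟨n, rfl⟩
    exact hg2 (T n) i fun h => hi (hTr n i h)

theorem tangent (p q : ℝ) (hp : 0 < p) (hq : 0 ≤ q) :
    -q * Real.log q ≤ -p * Real.log p + (-Real.log p - 1) * (q - p) := by
  rcases hq.eq_or_lt with rfl | hq
  · simp; nlinarith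
  · have h := Real.log_le_sub_one_of_pos (div_pos hp hq)
    rw [Real.log_div hp.ne' hq.ne'] at h
    have h2 := mul_le_mul_of_nonneg_left h hq.le
    have h3 : q * (p / q - 1) = p - q := by field_simp
    rw [h3] at h2
    nlinarith

theorem partial_bound (p q : ℕ → ℝ) (hp0 : ∀ i, 0 ≤ p i) (hq0 : ∀ i, 0 ≤ q i)
    (hp1 : ∀ i, p i ≤ 1) (ha : Antitone p) (hs : Summable p)
    (hsh : Summable fun i => -p i * Real.log (p i))
    (h1 : ∀ n, ∑ k ∈ Finset.range n, p k ≤ ∑ k ∈ Finset.range n, q k)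
    (h2 : ∀ n, ∑ k ∈ Finset.range n, q k ≤ ∑' k, p k) (n : ℕ) :
    ∑ k ∈ Finset.range n, -q k * Real.log (q k) ≤ ∑' k, -p k * Real.log (p k) := by
  have hnn : ∀ i, 0 ≤ -p i * Real.log (p i) := fun i => by
    have := Real.log_nonpos (hp0 i) (hp1 i)
    nlinarith [hp0 i]
  have key : ∀ n, 0 < p n → ∑ k ∈ Finset.range (n + 1), -q k * Real.log (q k) ≤
      ∑ k ∈ Finset.range (n + 1), -p k * Real.log (p k) +
      (-Real.log (p n) - 1) *
        (∑ k ∈ Finset.range (n + 1), q k - ∑ k ∈ Finset.range (n + 1), p k) := by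
    intro n
    induction n with
    | zero => intro h; simpa using tangent _ _ h (hq0 0)
    | succ n ih =>
      intro h
      have hn : 0 < p n := h.trans_le (ha (Nat.le_succ n))
      have h3 := ih hn
      have h4 := tangent _ _ h (hq0 (n + 1))
      have h5 : Real.log (p (n + 1)) ≤ Real.log (p n) := Real.log_le_log h (ha (Nat.le_succ n))
      have h6 := h1 (n + 1)
      rw [Finset.sum_range_succ _ (n + 1), Finset.sum_range_succ _ (n + 1),
        Finset.sum_range_succ _ (n + 1), Finset.sum_range_succ _ (n + 1)]
      nlinarith [mul_nonneg (sub_nonneg.2 h5) (sub_nonneg.2 h6)]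
  induction n with
  | zero => simpa using tsum_nonneg hnn
  | succ n ih =>
    rcases (hp0 n).eq_or_lt with h | h
    · have hz : ∀ k, k ∉ Finset.range n → p k = 0 := by
        intro k hk
        have hk' : n ≤ k := by simpa using hk
        exact le_antisymm (h ▸ ha hk') (hp0 k)
      have h3 := h2 (n + 1)
      rw [tsum_eq_sum hz, Finset.sum_range_succ] at h3
      have h4 : q n = 0 := le_antisymm (by linarith [h1 n]) (hq0 n)
      rw [Finset.sum_range_succ, h4]
      simpa using ih
    · refine (key n h).trans ?_
      rw [← hsh.sum_add_tsum_nat_add (n + 1)]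
      gcongr
      have h3 := h2 (n + 1)
      rw [← hs.sum_add_tsum_nat_add (n + 1)] at h3
      have h4 := h1 (n + 1)
      have hlog := Real.log_nonpos (hp0 n) (hp1 n)
      calc _ ≤ (-Real.log (p n)) * ∑' i, p (i + (n + 1)) := by nlinarith
        _ = ∑' i, (-Real.log (p n)) * p (i + (n + 1)) := tsum_mul_left.symm
        _ ≤ _ := by
          refine Summable.tsum_le_tsum (fun i => ?_)
            (((summable_nat_add_iff (n + 1)).2 hs).mul_left _)
            ((summable_nat_add_iff (f := fun i => -p i * Real.log (p i)) (n + 1)).2 hsh)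
          rcases (hp0 (i + (n + 1))).eq_or_lt with h5 | h5
          · rw [← h5]; simp
          · have := Real.log_le_log h5 (ha (show n ≤ i + (n + 1) by omega))
            nlinarith

theorem sh_eq (x : ℝ) : sh x = (-x * Real.log x) / Real.log 2 := by
  rw [sh, Real.logb]; ring

theorem sh_nonneg_of (x : ℝ) (h0 : 0 ≤ x) (h1 : x ≤ 1) : 0 ≤ sh x := by
  rw [sh_eq]
  have := Real.log_nonpos h0 h1
  have : 0 ≤ -x * Real.log x := by nlinarith
  positivity

theorem main_aux {X : Type*} [MeasurableSpace X] (μ : Measure X) (hμ : μ Set.univ ≤ 1)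
    (𝒬 : Set (Set X)) (h𝒬 : IsErrorControl 𝒬) (P : ℕ → Set X) (hP : IsPartition μ P)
    (hA : Acceptable 𝒬 P) :
    ∃ f : ℕ → Set X, (∀ i, f i ∈ 𝒬) ∧
      IsPartition μ (fun i => f i \ ⋃ j ∈ Finset.range i, f j) ∧
      partEntropy μ (fun i => f i \ ⋃ j ∈ Finset.range i, f j) ≤ partEntropy μ P := by
  haveI : IsFiniteMeasure μ := ⟨hμ.trans_lt one_lt_top⟩
  obtain ⟨hPm, hPd, hPn⟩ := hP
  have hle1 : ∀ s : Set X, μ.real s ≤ 1 := fun s =>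
    ENNReal.toReal_le_of_le_ofReal zero_le_one
      (by simpa using (measure_mono (Set.subset_univ s)).trans hμ)
  have hfe : ∀ s, (μ s).toReal = μ.real s := fun s => rfl
  choose F hF hPF using hA
  -- summability of the measures
  have hPs : Summable fun i => μ.real (P i) := by
    refine ENNReal.summable_toReal ?_
    rw [← measure_iUnion hPd hPm]
    exact measure_ne_top _ _
  obtain ⟨σ, hσ, hanti, hzero⟩ := exists_sort (fun i => μ.real (P i))
    (fun i => measureReal_nonneg) hPs.tendsto_cofinite_zero
  let f : ℕ → Set X := fun i => F (σ i)
  have hfm : ∀ i, MeasurableSet (f i) := fun i => h𝒬.1 _ (hF _)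
  have hdis : (fun i => f i \ ⋃ j ∈ Finset.range i, f j) = disjointed f := by
    funext i
    rw [disjointed_eq_inter_compl]
    ext x
    simp
  have hPf : ∀ i, P (σ i) ⊆ f i := fun i => hPF _
  have hcov : μ (⋃ i, P (σ i))ᶜ = 0 := by
    have hsub : (⋃ i, P (σ i))ᶜ ⊆ (Set.univ \ ⋃ i, P i) ∪
        ⋃ i : {i // i ∉ Set.range σ}, P i := by
      intro x hx
      by_cases hxP : x ∈ ⋃ i, P i
      · right
        obtain ⟨i, hi⟩ := Set.mem_iUnion.1 hxP
        refine Set.mem_iUnion.2 ⟨⟨i, ?_⟩, hi⟩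
        rintro ⟨n, rfl⟩
        exact hx (Set.mem_iUnion.2 ⟨n, hi⟩)
      · left; exact ⟨trivial, hxP⟩
    refine measure_mono_null hsub (measure_union_null hPn (measure_iUnion_null fun i => ?_))
    exact (measureReal_eq_zero_iff).1 (hzero i.1 i.2)
  have hpart : IsPartition μ (disjointed f) := by
    refine ⟨fun i => MeasurableSet.disjointed hfm i, disjoint_disjointed f, ?_⟩
    rw [iUnion_disjointed, ← Set.compl_eq_univ_sdiff]
    exact measure_mono_null (Set.compl_subset_compl.2 (Set.iUnion_mono hPf)) hcov
  refine ⟨f, fun i => hF _, hdis ▸ hpart, ?_⟩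
  rw [hdis]
  have hperm : partEntropy μ (fun i => P (σ i)) ≤ partEntropy μ P :=
    ENNReal.tsum_comp_le_tsum_of_injective hσ
      (fun i => ENNReal.ofReal (sh ((μ (P i)).toReal)))
  refine le_trans ?_ hperm
  by_cases htop : partEntropy μ (fun i => P (σ i)) = ⊤
  · rw [htop]; exact le_top
  have hPd' : Pairwise (Function.onFun Disjoint fun i => P (σ i)) :=
    fun i j hij => hPd (hσ.ne hij)
  have hsum : Summable fun i => μ.real (P (σ i)) := hPs.comp_injective hσ
  have htot : μ.real Set.univ = ∑' i, μ.real (P (σ i)) := by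
    have h1 : μ Set.univ = μ (⋃ i, P (σ i)) := by
      refine (measure_congr ?_).symm
      exact eventuallyEq_univ.2 hcov
    rw [Measure.real, h1, measure_iUnion hPd' (fun i => hPm _),
      ENNReal.tsum_toReal_eq (fun i => measure_ne_top _ _)]
    rfl
  have hl2 : 0 < Real.log 2 := Real.log_pos one_lt_two
  have hshs : Summable fun i => sh (μ.real (P (σ i))) := by
    have := ENNReal.summable_toReal htop
    refine this.congr fun i => ?_
    exact ENNReal.toReal_ofReal (sh_nonneg_of _ measureReal_nonneg (hle1 _))
  have hlogs : Summable fun i => -μ.real (P (σ i)) * Real.log (μ.real (P (σ i))) := by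
    refine (hshs.mul_right (Real.log 2)).congr fun i => ?_
    rw [sh_eq]; field_simp
  have hq : ∀ n, ∑ k ∈ Finset.range n, μ.real (disjointed f k) =
      μ.real (⋃ k ∈ Finset.range n, disjointed f k) := fun n =>
    (measureReal_biUnion_finset (fun i _ j _ h => disjoint_disjointed f h)
      (fun i _ => MeasurableSet.disjointed hfm i)).symm
  have hunion : ∀ n, ⋃ k ∈ Finset.range n, disjointed f k = ⋃ k ∈ Finset.range n, f k := by
    intro n
    induction n with
    | zero => simp
    | succ n ih =>
      rw [Finset.range_add_one, Finset.set_biUnion_insert, Finset.set_biUnion_insert, ih,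
        ← congrFun hdis n]
      exact Set.sdiff_union_self
  have hpn : ∀ n, ∑ k ∈ Finset.range n, μ.real (P (σ k)) =
      μ.real (⋃ k ∈ Finset.range n, P (σ k)) := fun n =>
    (measureReal_biUnion_finset (fun i _ j _ h => hPd' h) (fun i _ => hPm _)).symm
  have hb := partial_bound (fun i => μ.real (P (σ i))) (fun i => μ.real (disjointed f i))
    (fun i => measureReal_nonneg) (fun i => measureReal_nonneg) (fun i => hle1 _)
    hanti hsum hlogs
    (fun n => by
      rw [hq, hpn, hunion]
      exact measureReal_mono (Set.iUnion₂_mono fun i _ => hPf i) (measure_ne_top _ _))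
    (fun n => by
      rw [hq, ← htot]
      exact measureReal_mono (Set.subset_univ _))
  have hb' : ∀ n, ∑ k ∈ Finset.range n, sh (μ.real (disjointed f k)) ≤
      ∑' k, sh (μ.real (P (σ k))) := by
    intro n
    simp only [sh_eq]
    rw [← Finset.sum_div, tsum_div_const]
    exact div_le_div_of_nonneg_right (hb n) hl2.le
  unfold partEntropy
  simp only [hfe]
  rw [← ENNReal.ofReal_tsum_of_nonneg
    (fun i => sh_nonneg_of _ measureReal_nonneg (hle1 _)) hshs]
  refine ENNReal.tsum_le_of_sum_range_le fun n => ?_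
  rw [← ENNReal.ofReal_sum_of_nonneg
    (fun i _ => sh_nonneg_of _ measureReal_nonneg (hle1 _))]
  exact ENNReal.ofReal_le_ofReal (hb' n)

/-- Corollary III.2: if some `𝒬`-acceptable partition exists, then for every `ε > 0`
there is a `𝒬`-acceptable partition `P ⊆ Σ_𝒬` with `h(μ; P) ≤ H(μ; 𝒬) + ε`; moreover
`P` can be chosen of the form `{ f i ∖ (f 0 ∪ … ∪ f (i-1)) }_i` with `f i ∈ 𝒬`. -/
theorem stmt_5 {X : Type*} [MeasurableSpace X] (μ : Measure X) (hμ : μ Set.univ ≤ 1)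
    (𝒬 : Set (Set X)) (h𝒬 : IsErrorControl 𝒬)
    (hex : ∃ P : ℕ → Set X, IsPartition μ P ∧ Acceptable 𝒬 P)
    (ε : ℝ) (hε : 0 < ε) :
    ∃ f : ℕ → Set X, (∀ i, f i ∈ 𝒬) ∧
      IsPartition μ (fun i => f i \ ⋃ j ∈ Finset.range i, f j) ∧
      Acceptable 𝒬 (fun i => f i \ ⋃ j ∈ Finset.range i, f j) ∧
      (∀ i, MeasurableSet[MeasurableSpace.generateFrom 𝒬]
        (f i \ ⋃ j ∈ Finset.range i, f j)) ∧
      partEntropy μ (fun i => f i \ ⋃ j ∈ Finset.range i, f j) ≤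
        coverEntropy μ 𝒬 + ENNReal.ofReal ε := by
  have main : ∃ P : ℕ → Set X, IsPartition μ P ∧ Acceptable 𝒬 P ∧
      partEntropy μ P ≤ coverEntropy μ 𝒬 + ENNReal.ofReal ε := by
    by_cases htop : coverEntropy μ 𝒬 = ⊤
    · obtain ⟨P, h1, h2⟩ := hex
      exact ⟨P, h1, h2, by rw [htop]; simp⟩
    · have hlt : coverEntropy μ 𝒬 < coverEntropy μ 𝒬 + ENNReal.ofReal ε :=
        ENNReal.lt_add_right htop (by simpa using hε)
      conv_lhs at hlt => unfold coverEntropy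
      simp only [iInf_lt_iff] at hlt
      obtain ⟨P, h1, h2, h3⟩ := hlt
      exact ⟨P, h1, h2, h3.le⟩
  obtain ⟨P, h1, h2, h3⟩ := main
  obtain ⟨f, hf, hp, he⟩ := main_aux μ hμ 𝒬 h𝒬 P h1 h2
  refine ⟨f, hf, hp, fun i => ⟨f i, hf i, Set.sdiff_subset⟩, fun i => ?_, he.trans h3⟩
  have hm : ∀ j, MeasurableSet[MeasurableSpace.generateFrom 𝒬] (f j) := fun j =>
    MeasurableSpace.measurableSet_generateFrom (hf j)
  exact @MeasurableSet.diff X (MeasurableSpace.generateFrom 𝒬) _ _ (hm i)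
    (@Finset.measurableSet_biUnion _ _ (MeasurableSpace.generateFrom 𝒬) _ _ fun j _ => hm j)
end
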